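/- Let h > 0 and α > 0, and suppose the complex number z satisfies the resonance equation h^(−α)·exp(2iz/h) − h^(−α) + 2iz/h = 0 and Re z ≠ 0. Then, writing a = Re z and b = Im z, one has 0 ≤ −4b/h − ln(4a²·h^(2α−2)) ≤ (4b² + 4b·h^(1−α) + h^(2−2α)) / (4a²). -/

import Mathlib

open Complex Real

theorem resonance_log_inequality (h α : ℝ) (hh : 0 < h) (hα : 0 < α) (z : ℂ)
    (hres : ((h ^ (-α) : ℝ) : ℂ) * Complex.exp (2 * Complex.I * z / (h : ℂ))
        - ((h ^ (-α) : ℝ) : ℂ) + 2 * Complex.I * z / (h : ℂ) = 0)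
    (hre : z.re ≠ 0) :
    0 ≤ -(4 * z.im) / h - Real.log (4 * z.re ^ 2 * h ^ (2 * α - 2)) ∧
      -(4 * z.im) / h - Real.log (4 * z.re ^ 2 * h ^ (2 * α - 2))
        ≤ (4 * z.im ^ 2 + 4 * z.im * h ^ (1 - α) + h ^ (2 - 2 * α)) / (4 * z.re ^ 2) := by
  have hc : 0 < h ^ (-α) := Real.rpow_pos_of_pos hh _
  have hp1 : h ^ (1 - α) = h * h ^ (-α) := by
    rw [sub_eq_add_neg, Real.rpow_add hh, Real.rpow_one]
  have hp2 : h ^ (2 - 2 * α) = (h * h ^ (-α)) ^ 2 := by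
    rw [← hp1, ← Real.rpow_natCast, ← Real.rpow_mul hh.le]
    congr 1
    push_cast
    ring
  have hp3 : h ^ (2 * α - 2) = ((h * h ^ (-α)) ^ 2)⁻¹ := by
    rw [← hp2, ← Real.rpow_neg hh.le]
    congr 1
    ring
  rw [hp1, hp2, hp3]
  generalize h ^ (-α) = c at *
  have hw : 2 * Complex.I * z / (h : ℂ)
      = ((-(2 * z.im) / h : ℝ) : ℂ) + ((2 * z.re / h : ℝ) : ℂ) * Complex.I := by
    apply Complex.ext
    · simp [Complex.div_ofReal_re]
    · simp [Complex.div_ofReal_im]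
  rw [hw] at hres
  have h1 := congrArg Complex.re hres
  have h2 := congrArg Complex.im hres
  clear hres hw
  generalize z.re = a at *
  generalize z.im = b at *
  simp [Complex.exp_re, Complex.exp_im, -Complex.ofReal_div, -Complex.ofReal_mul, -Complex.ofReal_neg] at h1 h2
  have hE : Real.exp (-(4 * b) / h) = Real.exp (-(2 * b) / h) ^ 2 := by
    rw [← Real.exp_nat_mul]
    congr 1
    push_cast
    ring
  have hcs := Real.sin_sq_add_cos_sq (2 * a / h)
  generalize Real.sin (2 * a / h) = s at *
  generalize Real.cos (2 * a / h) = t at *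
  generalize Real.exp (-(2 * b) / h) = e at *
  have ha : 0 < a ^ 2 := by positivity
  have hkey : (h * c) ^ 2 * e ^ 2 = (h * c + 2 * b) ^ 2 + 4 * a ^ 2 := by
    have e1 : h * c * (e * t) = h * c + 2 * b := by
      field_simp at h1
      linarith
    have e2 : h * c * (e * s) = - (2 * a) := by
      field_simp at h2
      linarith
    calc (h * c) ^ 2 * e ^ 2 = (h * c) ^ 2 * e ^ 2 * (s ^ 2 + t ^ 2) := by rw [hcs, mul_one]
      _ = (h * c * (e * t)) ^ 2 + (h * c * (e * s)) ^ 2 := by ring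
      _ = _ := by rw [e1, e2]; ring
  have hX : 0 < 4 * a ^ 2 * ((h * c) ^ 2)⁻¹ := by positivity
  have hY : (4 * b ^ 2 + 4 * b * (h * c) + (h * c) ^ 2) / (4 * a ^ 2)
      = (h * c + 2 * b) ^ 2 / (4 * a ^ 2) := by ring
  rw [hY]
  have hY0 : 0 ≤ (h * c + 2 * b) ^ 2 / (4 * a ^ 2) := by positivity
  have hfac : Real.exp (-(4 * b) / h)
      = 4 * a ^ 2 * ((h * c) ^ 2)⁻¹ * (1 + (h * c + 2 * b) ^ 2 / (4 * a ^ 2)) := by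
    rw [hE]
    have : e ^ 2 = ((h * c + 2 * b) ^ 2 + 4 * a ^ 2) / (h * c) ^ 2 := by
      rw [← hkey]
      field_simp
    rw [this]
    field_simp
    ring
  have hlog := congrArg Real.log hfac
  rw [Real.log_exp, Real.log_mul hX.ne' (by positivity)] at hlog
  rw [hlog, add_sub_cancel_left]
  refine ⟨Real.log_nonneg (by linarith), ?_⟩
  have := Real.log_le_sub_one_of_pos (x := 1 + (h * c + 2 * b) ^ 2 / (4 * a ^ 2)) (by linarith)
  linarith
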